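/- Let M be a finitely generated projective R-module, let φ : M → M be an R-linear endomorphism with φ^m = 0 for some m ≥ 1, and let ψ : R^r → M be an R-linear map such that M = φ(M) + ψ(R^r). Let F = ^S M be the S-module obtained from (M, φ), and let Ψ : S^r → F be the S-linear map determined by sending the i-th standard basis vector to ψ(e_i). Then Ψ is surjective, and E := ker Ψ is a finitely generated projective S-module; in particular there is an exact sequence of S-modules 0 → E → S^r → F → 0 in which F is annihilated by x_n^m. -/

import Mathlib

/-!
Multiplication by `X` on `F` is `φ`, so the image of `Ψ` is a `φ`-stable submodule of `M` which
together with `φ(M)` spans `M`; as `φ` is nilpotent, it is everything.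

For any endomorphism `φ` the characteristic sequence
`0 → R[X] ⊗ M → R[X] ⊗ M → F → 0`, with first map `X - φ`, is exact, so `F` has projective dimension
at most one over `R[X]` when `M` is projective. By Schanuel's argument the kernel of every other
surjection from a projective module onto `F` is projective too.
-/

open Module Polynomial TensorProduct

section Schanuel

variable {S P Q F : Type*} [Ring S] [AddCommGroup P] [Module S P] [AddCommGroup Q] [Module S Q]
  [AddCommGroup F] [Module S F] [Projective S P] [Projective S Q] {p : P →ₗ[S] F} {q : Q →ₗ[S] F}

theorem exists_leftInverse_ker_prod_ker (hp : Function.Surjective p)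
    (hq : Function.Surjective q) :
    ∃ (s : LinearMap.ker p →ₗ[S] P × LinearMap.ker q)
      (t : P × LinearMap.ker q →ₗ[S] LinearMap.ker p), t ∘ₗ s = LinearMap.id := by
  obtain ⟨a, ha⟩ := projective_lifting_property p q hp
  obtain ⟨b, hb⟩ := projective_lifting_property q p hq
  have p_a (y : Q) : p (a y) = q y := LinearMap.congr_fun ha y
  have q_b (x : P) : q (b x) = p x := LinearMap.congr_fun hb x
  let s : LinearMap.ker p →ₗ[S] P × LinearMap.ker q :=
    (LinearMap.ker p).subtype.prod (b.restrict fun x hx ↦ by simpa [q_b] using hx)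
  let t : P × LinearMap.ker q →ₗ[S] LinearMap.ker p :=
    ((LinearMap.id - a ∘ₗ b).coprod (a ∘ₗ (LinearMap.ker q).subtype)).codRestrict _
      fun x ↦ by simp [p_a, q_b]
  exact ⟨s, t, LinearMap.ext fun x ↦ Subtype.ext <| sub_add_cancel (x : P) (a (b x))⟩

theorem projective_ker_of_projective_ker (hp : Function.Surjective p)
    (hq : Function.Surjective q) [Projective S (LinearMap.ker q)] :
    Projective S (LinearMap.ker p) :=
  have ⟨s, t, hts⟩ := exists_leftInverse_ker_prod_ker hp hq
  .of_split s t hts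

theorem finite_ker_of_finite_ker (hp : Function.Surjective p) (hq : Function.Surjective q)
    [Module.Finite S P] [Module.Finite S (LinearMap.ker q)] :
    Module.Finite S (LinearMap.ker p) :=
  have ⟨s, t, hts⟩ := exists_leftInverse_ker_prod_ker hp hq
  .of_surjective t fun x ↦ ⟨s x, LinearMap.congr_fun hts x⟩

end Schanuel

section Nilpotent

variable {R M : Type*} [Semiring R] [AddCommMonoid M] [Module R M] {φ : End R M}

theorem eq_top_of_isNilpotent_of_range_sup_eq_top (hφ : IsNilpotent φ) {N : Submodule R M}
    (hN : N ≤ N.comap φ) (h : LinearMap.range φ ⊔ N = ⊤) : N = ⊤ := by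
  have range_pow_sup (k : ℕ) : LinearMap.range (φ ^ k) ⊔ N = ⊤ := by
    induction k with
    | zero => simp [End.one_eq_id]
    | succ k ih =>
      have map_pow_le : N.map (φ ^ k) ≤ N :=
        Submodule.map_le_iff_le_comap.mpr fun x hx ↦ End.pow_apply_mem_of_forall_mem k hN x hx
      rw [eq_top_iff, ← ih, LinearMap.range_eq_map, ← h, Submodule.map_sup,
        ← LinearMap.range_comp, ← End.mul_eq_comp, ← pow_succ]
      exact sup_le (sup_le_sup_left map_pow_le _) le_sup_right
  obtain ⟨m, hm⟩ := hφ
  simpa [hm] using range_pow_sup m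

theorem finite_of_isNilpotent_of_range_sup_eq_top (hφ : IsNilpotent φ) {N : Submodule R M}
    (hN : N.FG) (h : LinearMap.range φ ⊔ N = ⊤) : Module.Finite R M := by
  obtain ⟨m, hm⟩ := hφ
  let orbit : Submodule R M := ⨆ i ∈ Finset.range m, N.map (φ ^ i)
  have map_pow_le (i : ℕ) : N.map (φ ^ i) ≤ orbit := by
    rcases lt_or_ge i m with hi | hi
    · exact le_biSup (fun i ↦ N.map (φ ^ i)) (Finset.mem_range.mpr hi)
    · simp [pow_eq_zero_of_le hi hm]
  have orbit_invariant : orbit ≤ orbit.comap φ := iSup₂_le fun i _ ↦ by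
    rw [← Submodule.map_le_iff_le_comap, ← Submodule.map_comp, ← End.mul_eq_comp, ← pow_succ']
    exact map_pow_le (i + 1)
  have le_orbit : N ≤ orbit := by simpa [End.one_eq_id] using map_pow_le 0
  have orbit_eq_top : orbit = ⊤ :=
    eq_top_of_isNilpotent_of_range_sup_eq_top ⟨m, hm⟩ orbit_invariant <|
      top_le_iff.mp <| h.ge.trans (sup_le_sup_left le_orbit _)
  exact ⟨orbit_eq_top ▸ Submodule.fg_biSup _ _ fun i _ ↦ hN.map (φ ^ i)⟩

end Nilpotent

section AEval

variable {R M : Type*} [CommSemiring R] [AddCommMonoid M] [Module R M] {φ : End R M}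

theorem surjective_aeval'_of_isNilpotent_of_range_sup_eq_top {P : Type*} [AddCommMonoid P]
    [Module R[X] P] (hφ : IsNilpotent φ) {N : Submodule R M} (h : LinearMap.range φ ⊔ N = ⊤)
    (Ψ : P →ₗ[R[X]] AEval' φ) (hΨ : ∀ x ∈ N, AEval'.of φ x ∈ LinearMap.range Ψ) :
    Function.Surjective Ψ := by
  let image : Submodule R M :=
    ((LinearMap.range Ψ).restrictScalars R).comap (AEval'.of φ).toLinearMap
  have image_invariant : image ≤ image.comap φ := fun x hx ↦ by
    change AEval'.of φ (φ x) ∈ LinearMap.range Ψ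
    rw [← AEval'.X_smul_of]
    exact Submodule.smul_mem _ X hx
  have image_eq_top : image = ⊤ :=
    eq_top_of_isNilpotent_of_range_sup_eq_top hφ image_invariant <|
      top_le_iff.mp <| h.ge.trans (sup_le_sup_left hΨ _)
  intro y
  exact image_eq_top.ge (Submodule.mem_top (x := (AEval'.of φ).symm y))

theorem aeval'_of_mem_range_of_forall_single {ι : Type*} [Finite ι] [DecidableEq ι]
    {ψ : (ι → R) →ₗ[R] M} {Ψ : (ι → R[X]) →ₗ[R[X]] AEval' φ}
    (hΨ : ∀ i, Ψ (Pi.single i 1) = AEval'.of φ (ψ (Pi.single i 1))) :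
    ∀ x ∈ LinearMap.range ψ, AEval'.of φ x ∈ LinearMap.range Ψ := by
  have _ := Fintype.ofFinite ι
  rintro _ ⟨v, rfl⟩
  rw [pi_eq_sum_univ' v]
  simp only [map_sum, map_smul, ← hΨ, ← AEval.C_smul]
  exact Submodule.sum_mem _ fun i _ ↦ Submodule.smul_mem _ _ ⟨_, rfl⟩

theorem X_pow_smul_aeval'_eq_zero {m : ℕ} (hφ : φ ^ m = 0) (x : AEval' φ) :
    (X ^ m : R[X]) • x = 0 := by
  obtain ⟨y, rfl⟩ := (AEval'.of φ).surjective x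
  rw [AEval'.X_pow_smul_of, hφ, zero_smul, map_zero]

end AEval

section CharacteristicSequence

variable {R M : Type*} [CommRing R] [AddCommGroup M] [Module R M] (φ : End R M)

/-- The augmentation `R[X] ⊗ M → M`, `p ⊗ x ↦ p(φ) x`, of the characteristic sequence of `φ`; it is
`R[X]`-linear when `X` acts on the target as `φ`. -/
noncomputable def aevalLift : R[X] ⊗[R] M →ₗ[R[X]] AEval' φ :=
  (AEval'.of φ).toLinearMap.liftBaseChange R[X]

/-- The characteristic endomorphism `X - φ` of `R[X] ⊗ M`, the differential of the characteristic
sequence of `φ`. -/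
noncomputable def charEnd : End R[X] (R[X] ⊗[R] M) :=
  (X : R[X]) • LinearMap.id - φ.baseChange R[X]

theorem aevalLift_surjective : Function.Surjective (aevalLift φ) := fun y ↦
  ⟨1 ⊗ₜ (AEval'.of φ).symm y, by simp [aevalLift]⟩

theorem aevalLift_comp_charEnd : aevalLift φ ∘ₗ charEnd φ = 0 := by
  ext x
  simp [aevalLift, charEnd, AEval'.X_smul_of]

-- Modulo the image of `X - φ`, the map `x ↦ 1 ⊗ x` turns `φ` into multiplication by `X`, which
-- provides an inverse of the map induced by `aevalLift φ`.
theorem exact_charEnd_aevalLift : Function.Exact (charEnd φ) (aevalLift φ) := by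
  refine LinearMap.exact_of_comp_of_mem_range (aevalLift_comp_charEnd φ) fun q hq ↦ ?_
  let π := (LinearMap.range (charEnd φ)).mkQ
  let incl : M →ₗ[R] R[X] ⊗[R] M ⧸ LinearMap.range (charEnd φ) :=
    π.restrictScalars R ∘ₗ TensorProduct.mk R R[X] M 1
  have incl_φ (x : M) : incl (φ x) = (X : R[X]) • incl x := by
    have mem_range : (X : R[X]) • (1 ⊗ₜ x) - 1 ⊗ₜ φ x ∈ LinearMap.range (charEnd φ) :=
      ⟨1 ⊗ₜ x, by simp [charEnd]⟩
    exact ((Submodule.Quotient.eq _).mpr mem_range).symm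
  let inv : AEval' φ →ₗ[R[X]] R[X] ⊗[R] M ⧸ LinearMap.range (charEnd φ) :=
    LinearMap.ofAEval φ incl incl_φ
  have inv_comp_aevalLift : inv ∘ₗ aevalLift φ = π := by
    ext x
    simp [inv, incl, aevalLift, LinearMap.ofAEval]
  have π_q : π q = 0 := by rw [← inv_comp_aevalLift, LinearMap.comp_apply, hq, map_zero]
  simpa [π] using π_q

variable {φ} in
theorem polynomialModule_eq_zero_of_X_smul_eq_map {q : PolynomialModule R M}
    (hq : (X : R[X]) • q = PolynomialModule.map R φ q) : q = 0 := by
  have coeff_eq (n : ℕ) : q.coeff n = φ (q.coeff (n + 1)) := by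
    have coeff_hq := congrArg (fun p ↦ p.coeff (n + 1)) hq
    simpa [← monomial_one_one_eq_X, PolynomialModule.map] using coeff_hq
  have coeff_eq_pow (n k : ℕ) : q.coeff n = (φ ^ k) (q.coeff (n + k)) := by
    induction k with
    | zero => simp
    | succ k ih => rw [ih, coeff_eq, pow_succ, End.mul_apply, add_assoc]
  obtain ⟨d, hd⟩ := q.coeff.support.bddAbove
  ext n
  have coeff_large : q.coeff (n + (d + 1)) = 0 :=
    Finsupp.notMem_support_iff.mp fun h ↦ by have := hd h; omega
  simp [coeff_eq_pow n (d + 1), coeff_large]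

theorem polynomialTensorProductLEquiv_baseChange (q : R[X] ⊗[R] M) :
    PolynomialModule.polynomialTensorProductLEquivPolynomialModule R M (φ.baseChange R[X] q) =
      PolynomialModule.map R φ
        (PolynomialModule.polynomialTensorProductLEquivPolynomialModule R M q) := by
  induction q with
  | zero => simp
  | add p q hp hq => simp [hp, hq]
  | tmul p x =>
    simp [PolynomialModule.polynomialTensorProductLEquivPolynomialModule,
      PolynomialModule.map_smul]

theorem charEnd_injective : Function.Injective (charEnd φ) := by
  rw [injective_iff_map_eq_zero]
  intro q hq
  have X_smul_q : (X : R[X]) • q = φ.baseChange R[X] q := by simpa [charEnd, sub_eq_zero] using hq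
  let e := PolynomialModule.polynomialTensorProductLEquivPolynomialModule R M
  refine (LinearEquiv.map_eq_zero_iff e).mp <| polynomialModule_eq_zero_of_X_smul_eq_map (φ := φ) ?_
  rw [← map_smul, X_smul_q, polynomialTensorProductLEquiv_baseChange]

/-- The identification of `R[X] ⊗ M` with the syzygy module of `AEval' φ` given by the
characteristic sequence. -/
noncomputable def equivKerAevalLift :
    (R[X] ⊗[R] M) ≃ₗ[R[X]] LinearMap.ker (aevalLift φ) :=
  LinearEquiv.ofInjective (charEnd φ) (charEnd_injective φ) ≪≫ₗ
    LinearEquiv.ofEq _ _ (exact_charEnd_aevalLift φ).linearMap_ker_eq.symm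

end CharacteristicSequence

section KernelOfSurjection

variable {R M P : Type*} [CommRing R] [AddCommGroup M] [Module R M] [Projective R M]
  [AddCommGroup P] [Module R[X] P] [Projective R[X] P] {φ : End R M} {Ψ : P →ₗ[R[X]] AEval' φ}

theorem projective_ker_of_surjective_aeval' (hΨ : Function.Surjective Ψ) :
    Projective R[X] (LinearMap.ker Ψ) :=
  have : Projective R[X] (LinearMap.ker (aevalLift φ)) := .of_equiv (equivKerAevalLift φ)
  projective_ker_of_projective_ker hΨ (aevalLift_surjective φ)

theorem finite_ker_of_surjective_aeval' [Module.Finite R[X] P] [Module.Finite R M]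
    (hΨ : Function.Surjective Ψ) : Module.Finite R[X] (LinearMap.ker Ψ) :=
  have : Module.Finite R[X] (LinearMap.ker (aevalLift φ)) := .equiv (equivKerAevalLift φ)
  finite_ker_of_finite_ker hΨ (aevalLift_surjective φ)

end KernelOfSurjection

theorem statement6_general {R : Type*} [CommRing R] {M : Type*} [AddCommGroup M] [Module R M]
    [Projective R M] {φ : End R M} {m : ℕ} (hφ : φ ^ m = 0) {ι : Type*} [Finite ι] [DecidableEq ι]
    {ψ : (ι → R) →ₗ[R] M} (hsurj : LinearMap.range φ ⊔ LinearMap.range ψ = ⊤)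
    {Ψ : (ι → R[X]) →ₗ[R[X]] AEval' φ}
    (hΨ : ∀ i, Ψ (Pi.single i 1) = AEval'.of φ (ψ (Pi.single i 1))) :
    Function.Surjective Ψ ∧ Module.Finite R[X] (LinearMap.ker Ψ) ∧
      Projective R[X] (LinearMap.ker Ψ) ∧ ∀ x : AEval' φ, (X ^ m : R[X]) • x = 0 := by
  have nilpotent : IsNilpotent φ := ⟨m, hφ⟩
  have surjective : Function.Surjective Ψ :=
    surjective_aeval'_of_isNilpotent_of_range_sup_eq_top nilpotent hsurj Ψ
      (aeval'_of_mem_range_of_forall_single hΨ)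
  have : Module.Finite R M :=
    finite_of_isNilpotent_of_range_sup_eq_top nilpotent (Submodule.fg_range ψ) hsurj
  exact ⟨surjective, finite_ker_of_surjective_aeval' surjective,
    projective_ker_of_surjective_aeval' surjective, X_pow_smul_aeval'_eq_zero hφ⟩

/-- module-theoretic shadow of direction (ii) ⇒ (i) of Kumar's
correspondence, Theorem 2.1 of the paper.
Let `K` be a field, `n ≥ 1`, `R = K[x_0,…,x_{n-1}]` and `S = R[x_n]`.
Let `M` be a finitely generated projective `R`-module, `φ : M → M` `R`-linear with
`φ^m = 0` for some `m ≥ 1`, and `ψ : R^r → M` `R`-linear with `M = φ(M) + ψ(R^r)`.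
Let `F = ^S M` (Mathlib's `Module.AEval' φ`) and let `Ψ : S^r → F` be the `S`-linear map
sending the `i`-th standard basis vector to `ψ(e_i)`.  Then `Ψ` is surjective and
`E := ker Ψ` is a finitely generated projective `S`-module; in particular there is an
exact sequence `0 → E → S^r → F → 0` of `S`-modules in which `F` is annihilated
by `x_n^m`. -/
theorem statement6 (K : Type*) [Field K] (n : ℕ) (hn : 1 ≤ n)
    (M : Type*) [AddCommGroup M] [Module (MvPolynomial (Fin n) K) M]
    [Module.Finite (MvPolynomial (Fin n) K) M]
    [Module.Projective (MvPolynomial (Fin n) K) M]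
    (m : ℕ) (hm : 1 ≤ m)
    (φ : M →ₗ[MvPolynomial (Fin n) K] M) (hφ : φ ^ m = 0)
    (r : ℕ) (ψ : (Fin r → MvPolynomial (Fin n) K) →ₗ[MvPolynomial (Fin n) K] M)
    (hsurj : LinearMap.range φ ⊔ LinearMap.range ψ = ⊤)
    (Ψ : (Fin r → Polynomial (MvPolynomial (Fin n) K))
      →ₗ[Polynomial (MvPolynomial (Fin n) K)] Module.AEval' φ)
    (hΨ : ∀ i : Fin r, Ψ (Pi.single i 1) = Module.AEval'.of φ (ψ (Pi.single i 1))) :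
    Function.Surjective Ψ ∧
      Module.Finite (Polynomial (MvPolynomial (Fin n) K)) (LinearMap.ker Ψ) ∧
      Module.Projective (Polynomial (MvPolynomial (Fin n) K)) (LinearMap.ker Ψ) ∧
      ∀ x : Module.AEval' φ,
        ((Polynomial.X : Polynomial (MvPolynomial (Fin n) K)) ^ m) • x = 0 :=
  statement6_general hφ hsurj hΨ
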